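/- Let B_n(x) be the Bell polynomials and fix c > 0. Let w = LW₀(1/c), i.e., the unique w > 0 with w·e^w = 1/c. Then B_n(c·n)·exp(c·n + n − n/w)·(w/n)^n·√(w + 1) → 1 as n → ∞. -/

import Mathlib

/-- The Bell polynomials, defined by `B₀ = 1` and `B_{n+1} = X * (Bₙ' + Bₙ)`. -/
noncomputable def Bell : ℕ → Polynomial ℝ
  | 0 => 1
  | n + 1 => Polynomial.X * (Polynomial.derivative (Bell n) + Bell n)

open Complex in
/-- The `n`-th derivative of the exponential generating function `exp (x (exp z - 1))`. -/
theorem iteratedDeriv_cexp_mul_cexp_sub_one (x : ℝ) (n : ℕ) :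
    iteratedDeriv n (fun z : ℂ => cexp (x * (cexp z - 1))) =
      fun z => Polynomial.aeval (x * cexp z) (Bell n) * cexp (x * (cexp z - 1)) := by
  induction n with
  | zero => simp [Bell]
  | succ n ih =>
    rw [iteratedDeriv_succ, ih]
    ext z
    have hE : HasDerivAt (fun z : ℂ => x * cexp z) (x * cexp z) z :=
      (Complex.hasDerivAt_exp z).const_mul _
    have hP := ((Bell n).hasDerivAt_aeval (x * cexp z)).comp z hE
    have hF : HasDerivAt (fun z : ℂ => cexp (x * (cexp z - 1)))
        (cexp (x * (cexp z - 1)) * (x * cexp z)) z :=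
      (((Complex.hasDerivAt_exp z).sub_const 1).const_mul (x : ℂ)).cexp
    refine (hP.mul hF).deriv.trans ?_
    simp only [Function.comp_apply, Bell, map_mul, map_add, Polynomial.aeval_X]
    ring

/-- The phase of the Cauchy integral for the Bell polynomials, normalized to vanish at the saddle
point when `c * exp w = 1 / w`. -/
noncomputable def bellPhase (c w θ : ℝ) : ℂ :=
  c * Complex.exp (w * Complex.exp (θ * Complex.I)) - 1 / w - θ * Complex.I

theorem hasDerivAt_exp_mul_exp (c w θ : ℝ) :
    HasDerivAt (fun θ : ℝ => (c * Complex.exp (w * Complex.exp (θ * Complex.I)) : ℂ))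
      (c * Complex.exp (w * Complex.exp (θ * Complex.I)) * (w * Complex.exp (θ * Complex.I))
        * Complex.I) θ := by
  have h0 : HasDerivAt (fun θ : ℝ => (θ * Complex.I : ℂ)) Complex.I θ := by
    simpa using (Complex.ofRealCLM.hasDerivAt (x := θ)).mul_const Complex.I
  refine (((h0.cexp.const_mul (w : ℂ)).cexp).const_mul (c : ℂ)).congr_deriv ?_
  ring


open Complex in
/-- Cauchy's integral formula for the Bell polynomials on the circle of radius `w`. -/
theorem Bell_eval_eq_integral (x : ℝ) {w : ℝ} (hw : 0 < w) (n : ℕ) :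
    (((Bell n).eval x : ℝ) : ℂ) * (2 * Real.pi) * w ^ n =
      n.factorial * ∫ θ : ℝ in -Real.pi..Real.pi,
        cexp (x * (cexp (w * cexp (θ * I)) - 1) - n * (θ * I)) := by
  have hd : Differentiable ℂ (fun z : ℂ => cexp (x * (cexp z - 1))) := by fun_prop
  have h := hd.diffContOnCl.circleIntegral_one_div_sub_center_pow_smul (c := 0) hw n
  rw [iteratedDeriv_cexp_mul_cexp_sub_one] at h
  have h0 : Polynomial.aeval ((x : ℂ) * cexp 0) (Bell n) = (((Bell n).eval x : ℝ) : ℂ) := by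
    simpa using Polynomial.aeval_algebraMap_apply ℂ x (Bell n)
  have hper : Function.Periodic (fun θ : ℝ => deriv (circleMap 0 w) θ •
      ((1 / (circleMap 0 w θ - 0) ^ (n + 1)) • cexp (x * (cexp (circleMap 0 w θ) - 1))))
      (2 * Real.pi) := fun θ => by
    simp only [deriv_circleMap, periodic_circleMap _ _ θ]
  rw [circleIntegral] at h
  have hshift := hper.intervalIntegral_add_eq 0 (-Real.pi)
  rw [zero_add, show -Real.pi + 2 * Real.pi = Real.pi by ring] at hshift
  rw [hshift] at h
  beta_reduce at h
  rw [h0] at h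
  have hint : (∫ θ : ℝ in -Real.pi..Real.pi, deriv (circleMap 0 w) θ •
      ((1 / (circleMap 0 w θ - 0) ^ (n + 1)) • cexp (x * (cexp (circleMap 0 w θ) - 1)))) =
      (I / w ^ n) * ∫ θ : ℝ in -Real.pi..Real.pi,
        cexp (x * (cexp (w * cexp (θ * I)) - 1) - n * (θ * I)) := by
    rw [← intervalIntegral.integral_const_mul]
    refine intervalIntegral.integral_congr fun θ _ => ?_
    have hw' : (w : ℂ) ≠ 0 := ofReal_ne_zero.2 hw.ne'
    have he := exp_ne_zero ((θ : ℂ) * I)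
    simp only [deriv_circleMap, circleMap, zero_add, sub_zero, smul_eq_mul]
    rw [exp_sub, exp_nat_mul]
    field_simp
    ring
  rw [hint] at h
  simp only [exp_zero, sub_self, mul_zero, mul_one, smul_eq_mul] at h
  have hw' : (w : ℂ) ^ n ≠ 0 := pow_ne_zero _ (ofReal_ne_zero.2 hw.ne')
  have hn : (n.factorial : ℂ) ≠ 0 := Nat.cast_ne_zero.2 n.factorial_ne_zero
  generalize (∫ θ : ℝ in -Real.pi..Real.pi,
    cexp (x * (cexp (w * cexp (θ * I)) - 1) - n * (θ * I))) = J at *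
  field_simp at h
  linear_combination -h

open Asymptotics in
theorem bellPhase_isLittleO {c w : ℝ} (hc : c * Real.exp w = 1 / w) (hw : 0 < w) :
    (fun θ : ℝ => bellPhase c w θ + (((w + 1) / 2 * θ ^ 2 : ℝ) : ℂ)) =o[nhds 0]
      fun θ : ℝ => θ ^ 2 := by
  have hcd : ContDiff ℝ 2 (bellPhase c w) := by
    unfold bellPhase
    have := Complex.ofRealCLM.contDiff (n := 2)
    have h1 : ContDiff ℝ 2 fun θ : ℝ => (θ : ℂ) := this
    fun_prop
  have hI (θ : ℝ) : HasDerivAt (fun θ : ℝ => (θ * Complex.I : ℂ)) Complex.I θ := by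
    simpa using (Complex.ofRealCLM.hasDerivAt (x := θ)).mul_const Complex.I
  have hd1 : deriv (bellPhase c w) = fun θ : ℝ =>
      c * Complex.exp (w * Complex.exp (θ * Complex.I)) * (w * Complex.exp (θ * Complex.I))
        * Complex.I - Complex.I :=
    funext fun θ => (((hasDerivAt_exp_mul_exp c w θ).sub_const _).sub (hI θ)).deriv
  have hcC : (c : ℂ) * Complex.exp w = 1 / w := by exact_mod_cast congrArg Complex.ofReal hc
  have hw' : (w : ℂ) ≠ 0 := Complex.ofReal_ne_zero.2 hw.ne'
  have h0 : bellPhase c w 0 = 0 := by simp [bellPhase, hcC]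
  have h1 : deriv (bellPhase c w) 0 = 0 := by
    rw [hd1]
    simp [hcC, hw']
  have h2 : deriv (deriv (bellPhase c w)) 0 = -(w + 1) := by
    rw [hd1]
    have := (((hasDerivAt_exp_mul_exp c w 0).mul
      ((hI 0).cexp.const_mul (w : ℂ))).mul_const Complex.I).sub_const Complex.I
    refine this.deriv.trans ?_
    simp only [Complex.ofReal_zero, zero_mul, Complex.exp_zero, mul_one, hcC, one_mul]
    field_simp
    linear_combination (w + 1 : ℂ) * Complex.I_sq
  have ht := taylor_isLittleO_univ (x₀ := 0) hcd
  refine ht.congr' (.of_forall fun θ => ?_) (.of_forall fun θ => by simp)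
  simp only [taylorWithinEval_succ, taylor_within_zero_eval, iteratedDerivWithin_univ,
    iteratedDeriv_succ, iteratedDeriv_zero, h0, h1, h2]
  simp
  ring

theorem re_bellPhase_le {c w θ : ℝ} (hc : c * Real.exp w = 1 / w) (hc0 : 0 < c) (hw : 0 < w)
    (hθ : |θ| ≤ Real.pi) :
    (bellPhase c w θ).re ≤ -(c * Real.exp (-w) * w * (2 / Real.pi ^ 2)) * θ ^ 2 := by
  have hcos := Real.cos_le_one_sub_mul_cos_sq hθ
  have hre : (bellPhase c w θ).re =
      c * (Complex.exp (w * Complex.exp (θ * Complex.I))).re - c * Real.exp w := by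
    rw [hc]
    simp [bellPhase, ← Complex.ofReal_inv]
  have hnorm : (Complex.exp (w * Complex.exp (θ * Complex.I))).re ≤
      Real.exp (w * Real.cos θ) := by
    refine (Complex.re_le_norm _).trans_eq ?_
    rw [Complex.norm_exp, Complex.re_ofReal_mul, Complex.exp_ofReal_mul_I_re]
  have hsplit : Real.exp w = Real.exp (w * Real.cos θ) * Real.exp (w * (1 - Real.cos θ)) := by
    rw [← Real.exp_add]; ring_nf
  have hlow : Real.exp (-w) ≤ Real.exp (w * Real.cos θ) :=
    Real.exp_le_exp.2 (by nlinarith [Real.neg_one_le_cos θ])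
  have hone := Real.add_one_le_exp (w * (1 - Real.cos θ))
  have hdiff : Real.exp (-w) * (w * (2 / Real.pi ^ 2 * θ ^ 2)) ≤
      Real.exp w - Real.exp (w * Real.cos θ) := by
    rw [hsplit]
    calc _ ≤ Real.exp (w * Real.cos θ) * (w * (1 - Real.cos θ)) := by
          gcongr; linarith
      _ ≤ _ := by nlinarith [Real.exp_pos (w * Real.cos θ)]
  rw [hre]
  nlinarith

open MeasureTheory Filter Asymptotics Topology in
/-- **Laplace's method** for a complex phase with a nondegenerate maximum at the origin. -/
theorem tendsto_sqrt_mul_integral_exp_nat_mul {h : ℝ → ℂ} {a b δ : ℝ} (hb : 0 < b)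
    (hδ : 0 < δ) (hcont : Continuous h) (hre : ∀ θ, |θ| ≤ b → (h θ).re ≤ -δ * θ ^ 2)
    (hh : (fun θ : ℝ => h θ + ((a * θ ^ 2 : ℝ) : ℂ)) =o[𝓝 0] fun θ : ℝ => θ ^ 2) :
    Tendsto (fun n : ℕ => (√n : ℂ) * ∫ θ in -b..b, Complex.exp (n * h θ)) atTop
      (𝓝 (√(Real.pi / a) : ℝ)) := by
  have hlim : Tendsto (fun n : ℕ => ∫ s : ℝ, (Set.Ioc (-b * √n) (b * √n)).indicator
      (fun s => Complex.exp (n * h (s / √n))) s) atTop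
      (𝓝 (∫ s : ℝ, ((Real.exp (-a * s ^ 2) : ℝ) : ℂ))) := by
    refine tendsto_integral_of_dominated_convergence (fun s => Real.exp (-δ * s ^ 2))
      (fun n => ?_) (integrable_exp_neg_mul_sq hδ) (fun n => .of_forall fun s => ?_)
      (.of_forall fun s => ?_)
    · exact (Continuous.aestronglyMeasurable (by fun_prop)).indicator measurableSet_Ioc
    · by_cases hs : s ∈ Set.Ioc (-b * √n) (b * √n)
      · rw [Set.indicator_of_mem hs, Complex.norm_exp]
        have hn : 0 < √(n : ℝ) := by
          by_contra hn
          have : √(n : ℝ) = 0 := le_antisymm (not_lt.1 hn) (Real.sqrt_nonneg _)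
          simp [this] at hs
        have h1 := hre (s / √n) (by
          rw [abs_div, abs_of_pos hn, div_le_iff₀ hn, abs_le]
          exact ⟨by linarith [hs.1], hs.2⟩)
        rw [div_pow, Real.sq_sqrt n.cast_nonneg] at h1
        have hn' : (0 : ℝ) < n := Real.sqrt_pos.1 hn
        refine Real.exp_le_exp.2 ?_
        rw [← Complex.ofReal_natCast, Complex.re_ofReal_mul]
        calc _ ≤ n * (-δ * (s ^ 2 / n)) := by gcongr
          _ = _ := by field_simp
      · rw [Set.indicator_of_notMem hs, norm_zero]
        positivity
    · have hsq : Tendsto (fun n : ℕ => √(n : ℝ)) atTop atTop :=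
        Real.tendsto_sqrt_atTop.comp tendsto_natCast_atTop_atTop
      have hθ : Tendsto (fun n : ℕ => s / √(n : ℝ)) atTop (𝓝 0) := hsq.const_div_atTop s
      have hev : ∀ᶠ n : ℕ in atTop, s ∈ Set.Ioc (-b * √n) (b * √n) := by
        filter_upwards [(hsq.const_mul_atTop hb).eventually_gt_atTop |s|] with n hn
        have := abs_lt.1 hn
        exact ⟨by linarith [this.1], this.2.le⟩
      have ho : (fun n : ℕ => (n : ℂ) * (h (s / √n) + ((a * (s / √n) ^ 2 : ℝ) : ℂ)))
          =o[atTop] fun _ : ℕ => s ^ 2 := by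
        have h1 : (fun n : ℕ => (n : ℂ)) =O[atTop] fun n : ℕ => (n : ℝ) :=
          .of_norm_le fun n => by simp
        refine (h1.mul_isLittleO (hh.comp_tendsto hθ)).congr' (.of_forall fun n => rfl) ?_
        filter_upwards [eventually_gt_atTop 0] with n hn
        have hn' : (0 : ℝ) < n := Nat.cast_pos.2 hn
        simp only [Function.comp_apply, div_pow, Real.sq_sqrt hn'.le]
        field_simp
      have hz : Tendsto (fun n : ℕ => (n : ℂ) * (h (s / √n) + ((a * (s / √n) ^ 2 : ℝ) : ℂ)))
          atTop (𝓝 0) :=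
        (isLittleO_one_iff ℝ).1 (ho.trans_isBigO (isBigO_const_const _ one_ne_zero _))
      have hexp := (Complex.continuous_exp.tendsto _).comp (hz.sub_const ((a * s ^ 2 : ℝ) : ℂ))
      rw [zero_sub, ← Complex.ofReal_neg, ← Complex.ofReal_exp, ← neg_mul] at hexp
      refine hexp.congr' ?_
      filter_upwards [hev, eventually_gt_atTop 0] with n hn hn0
      have hn' : (n : ℂ) ≠ 0 := Nat.cast_ne_zero.2 hn0.ne'
      have hsq' : (√n : ℂ) ^ 2 = n := by
        exact_mod_cast congrArg Complex.ofReal (Real.sq_sqrt n.cast_nonneg)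
      rw [Set.indicator_of_mem hn, Function.comp_apply]
      congr 1
      push_cast
      rw [div_pow, hsq']
      field_simp
      ring
  rw [integral_complex_ofReal, integral_gaussian] at hlim
  refine hlim.congr' ?_
  filter_upwards [eventually_gt_atTop 0] with n hn
  have hn' : 0 < √(n : ℝ) := Real.sqrt_pos.2 (Nat.cast_pos.2 hn)
  rw [integral_indicator measurableSet_Ioc, ← intervalIntegral.integral_of_le (by nlinarith),
    intervalIntegral.integral_comp_div (fun θ => Complex.exp (n * h θ)) hn'.ne',
    mul_div_cancel_right₀ _ hn'.ne', mul_div_cancel_right₀ _ hn'.ne', Complex.real_smul]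

/-- For fixed `c > 0` and `w = LW₀(1/c)` (the unique `w > 0` with `w·e^w = 1/c`),
`Bₙ(c·n)·exp(c·n + n − n/w)·(w/n)ⁿ·√(w+1) → 1` as `n → ∞`. -/
theorem bell_asymptotics_on_ray (c w : ℝ) (hc : 0 < c) (hw : 0 < w)
    (hwc : w * Real.exp w = 1 / c) :
    Filter.Tendsto (fun n : ℕ =>
        (Bell n).eval (c * n) * Real.exp (c * n + n - n / w) *
          (w / n) ^ n * Real.sqrt (w + 1))
      Filter.atTop (nhds 1) := by
  have hcw : c * Real.exp w = 1 / w := by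
    field_simp at hwc ⊢
    linarith
  have hcont : Continuous (bellPhase c w) := by
    unfold bellPhase
    fun_prop
  have hlap := tendsto_sqrt_mul_integral_exp_nat_mul Real.pi_pos
    (show 0 < c * Real.exp (-w) * w * (2 / Real.pi ^ 2) by positivity) hcont
    (fun θ => re_bellPhase_le hcw hc hw) (bellPhase_isLittleO hcw hw)
  have hst : Filter.Tendsto (fun n => (Stirling.stirlingSeq n : ℂ)) Filter.atTop
      (nhds (√Real.pi : ℝ)) :=
    (Complex.continuous_ofReal.tendsto _).comp Stirling.tendsto_stirlingSeq_sqrt_pi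
  have hmul := (hst.mul hlap).mul_const ((√2 * √(w + 1) / (2 * Real.pi) : ℝ) : ℂ)
  have hone : √Real.pi * √(Real.pi / ((w + 1) / 2)) * (√2 * √(w + 1) / (2 * Real.pi)) = 1 := by
    have hπ := Real.pi_pos
    rw [Real.sqrt_div hπ.le, Real.sqrt_div (by positivity)]
    have h1 : √(w + 1) ≠ 0 := by positivity
    have h2 : √2 ^ 2 = (2 : ℝ) := Real.sq_sqrt (by norm_num)
    have h3 : √Real.pi ^ 2 = Real.pi := Real.sq_sqrt hπ.le
    field_simp
    rw [h2, h3]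
    ring
  rw [← Complex.ofReal_mul, ← Complex.ofReal_mul, hone] at hmul
  have hre := (Complex.continuous_re.tendsto _).comp hmul
  rw [Complex.ofReal_re] at hre
  refine hre.congr' ?_
  filter_upwards [Filter.eventually_gt_atTop 0] with n hn
  rw [Function.comp_apply]
  refine (congrArg Complex.re ?_).trans (Complex.ofReal_re _)
  have hB := Bell_eval_eq_integral (c * n) hw n
  have hint : (∫ θ : ℝ in -Real.pi..Real.pi, Complex.exp (((c * n : ℝ) : ℂ) *
      (Complex.exp (w * Complex.exp (θ * Complex.I)) - 1) - n * (θ * Complex.I))) =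
      Complex.exp (-(c * n - n / w : ℝ)) *
        ∫ θ : ℝ in -Real.pi..Real.pi, Complex.exp (n * bellPhase c w θ) := by
    rw [← intervalIntegral.integral_const_mul]
    refine intervalIntegral.integral_congr fun θ _ => ?_
    simp only [bellPhase, ← Complex.exp_add]
    congr 1
    push_cast
    ring
  rw [hint] at hB
  set J := ∫ θ : ℝ in -Real.pi..Real.pi, Complex.exp (n * bellPhase c w θ)
  have hexp : Real.exp (c * n + n - n / w) = Real.exp (c * n - n / w) * Real.exp 1 ^ n := by
    rw [← Real.exp_nat_mul, ← Real.exp_add]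
    ring_nf
  rw [hexp, Stirling.stirlingSeq, Real.sqrt_mul zero_le_two]
  rw [Complex.exp_neg, ← Complex.ofReal_exp] at hB
  have hE : ((Real.exp (c * n - n / w) : ℝ) : ℂ) ≠ 0 :=
    Complex.ofReal_ne_zero.2 (Real.exp_pos _).ne'
  have hs2 : ((√2 : ℝ) : ℂ) ≠ 0 := Complex.ofReal_ne_zero.2 (by positivity)
  have hsn : ((√(n : ℝ) : ℝ) : ℂ) ≠ 0 :=
    Complex.ofReal_ne_zero.2 (Real.sqrt_pos.2 (Nat.cast_pos.2 hn)).ne'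
  have hn' : (n : ℂ) ≠ 0 := Nat.cast_ne_zero.2 hn.ne'
  have he1 : ((Real.exp 1 : ℝ) : ℂ) ≠ 0 := Complex.ofReal_ne_zero.2 (Real.exp_pos _).ne'
  have hπ : (Real.pi : ℂ) ≠ 0 := Complex.ofReal_ne_zero.2 Real.pi_ne_zero
  generalize Real.exp (c * n - n / w) = E at *
  generalize Real.exp 1 = e at *
  push_cast
  rw [div_pow, div_pow]
  field_simp at hB ⊢
  linear_combination -(√(w + 1) : ℂ) * hB
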